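/- arXiv:2304.02863 — 2 statements merged into one kernel-verified Lean document; each statement's English description precedes it below -/
import Mathlib

section
/- Let Φ be a stationary random measure on ℝ^d with intensity λ_Φ ∈ (0,∞) and Palm distribution P_Φ. Then P_Φ, regarded as the law of a random element of M(ℝ^d), is mass-stationary: for every translation-covariant measurable g : M(ℝ^d) × ℝ^d × ℝ^d → [0,∞], ∫_{M(ℝ^d)} ∫ g(ψ, 0, y) dψ(y) dP_Φ(ψ) = ∫_{M(ℝ^d)} ∫ g(ψ, y, 0) dψ(y) dP_Φ(ψ). -/
open MeasureTheory ENNReal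

noncomputable section

/-- `ℝ^d`. -/
abbrev Vec (d : ℕ) := Fin d → ℝ

/-- The shift `T_t ψ`, defined by `(T_t ψ)(A) = ψ(A + t)`. -/
def shiftM {d : ℕ} (t : Vec d) (ψ : Measure (Vec d)) : Measure (Vec d) :=
  ψ.map (fun x => x - t)

/-- A measure is in `M(ℝ^d)` iff it is finite on bounded sets. -/
def BddFinite {d : ℕ} (ψ : Measure (Vec d)) : Prop :=
  ∀ s : Set (Vec d), Bornology.IsBounded s → ψ s < ⊤

/-- Translation covariance of `g : M(ℝ^d) × ℝ^d × ℝ^d → [0,∞]`. -/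
def Covariant3 {d : ℕ} (g : Measure (Vec d) → Vec d → Vec d → ℝ≥0∞) : Prop :=
  ∀ (t x y : Vec d) (ψ : Measure (Vec d)), g (shiftM t ψ) (x - t) (y - t) = g ψ x y

/-- A random measure `Ψ` on a probability space `(Ω, P)` is mass-stationary if the mass
transport principle holds for every translation-covariant measurable `g`. -/
def MassStationary {d : ℕ} {Ω : Type*} [MeasurableSpace Ω] (P : Measure Ω)
    (Ψ : Ω → Measure (Vec d)) : Prop :=
  ∀ g : Measure (Vec d) → Vec d → Vec d → ℝ≥0∞,
    Measurable (fun p : Measure (Vec d) × Vec d × Vec d => g p.1 p.2.1 p.2.2) →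
    Covariant3 g →
    ∫⁻ ω, (∫⁻ y, g (Ψ ω) 0 y ∂(Ψ ω)) ∂P = ∫⁻ ω, (∫⁻ y, g (Ψ ω) y 0 ∂(Ψ ω)) ∂P

/-- Mass-stationarity expressed in terms of the law `Q` of a random measure on `ℝ^d`. -/
def MassStationaryLaw {d : ℕ} (Q : Measure (Measure (Vec d))) : Prop :=
  ∀ g : Measure (Vec d) → Vec d → Vec d → ℝ≥0∞,
    Measurable (fun p : Measure (Vec d) × Vec d × Vec d => g p.1 p.2.1 p.2.2) →
    Covariant3 g →
    ∫⁻ ψ, (∫⁻ y, g ψ 0 y ∂ψ) ∂Q = ∫⁻ ψ, (∫⁻ y, g ψ y 0 ∂ψ) ∂Q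

/-- The unit box `[0,1)^d`. -/
def unitBox (d : ℕ) : Set (Vec d) := Set.univ.pi fun _ : Fin d => Set.Ico (0 : ℝ) 1

section Aux
open ProbabilityTheory

variable {d : ℕ}

def Fset (d : ℕ) : Set (Measure (Vec d)) := {ψ | ∀ n : ℕ, ψ (Metric.ball 0 n) < ⊤}

lemma Fset_iff (ψ : Measure (Vec d)) : ψ ∈ Fset d ↔ BddFinite ψ := by
  constructor
  · intro h s hs
    obtain ⟨r, hr⟩ := hs.subset_ball 0
    obtain ⟨n, hn⟩ := exists_nat_ge r
    exact (measure_mono (hr.trans (Metric.ball_subset_ball hn))).trans_lt (h n)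
  · intro h n
    exact h _ Metric.isBounded_ball

lemma Fset_meas : MeasurableSet (Fset d) := by
  have : Fset d = ⋂ n : ℕ, {ψ | ψ (Metric.ball 0 n) < ⊤} := by
    ext; simp [Fset]
  rw [this]
  refine MeasurableSet.iInter fun n => ?_
  exact measurableSet_lt (Measure.measurable_coe Metric.isOpen_ball.measurableSet) measurable_const

def ann (d : ℕ) (n : ℕ) : Set (Vec d) := disjointed (fun n : ℕ => Metric.ball (0 : Vec d) n) n

lemma ann_meas (n : ℕ) : MeasurableSet (ann d n) :=
  MeasurableSet.disjointed (fun _ => Metric.isOpen_ball.measurableSet) n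

def piece (d : ℕ) (n k : ℕ) : Set (Measure (Vec d)) :=
  {ψ | ψ ∈ Fset d ∧ ((k : ℝ≥0∞) ≤ ψ (ann d n) ∧ ψ (ann d n) < k + 1)}

lemma piece_meas (n k : ℕ) : MeasurableSet (piece d n k) := by
  refine Fset_meas.inter (MeasurableSet.inter ?_ ?_)
  · exact measurableSet_le measurable_const (Measure.measurable_coe (ann_meas n))
  · exact measurableSet_lt (Measure.measurable_coe (ann_meas n)) measurable_const

def idK (d : ℕ) : Kernel (Measure (Vec d)) (Vec d) := ⟨id, measurable_id⟩

open Classical in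
def kap (d : ℕ) : Kernel (Measure (Vec d)) (Vec d) := Kernel.piecewise Fset_meas (idK d) 0

open Classical in
def kapP (d : ℕ) (p : ℕ × ℕ) : Kernel (Measure (Vec d)) (Vec d) :=
  Kernel.piecewise (piece_meas p.1 p.2) ((idK d).restrict (ann_meas p.1)) 0

lemma kap_of_mem {ψ : Measure (Vec d)} (h : ψ ∈ Fset d) : kap d ψ = ψ := by
  simp [kap, Kernel.piecewise_apply, h, idK]

lemma kap_of_notMem {ψ : Measure (Vec d)} (h : ψ ∉ Fset d) : kap d ψ = 0 := by
  simp [kap, Kernel.piecewise_apply, h]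

instance (p : ℕ × ℕ) : IsFiniteKernel (kapP d p) := by
  refine ⟨⟨p.2 + 1, by finiteness, fun ψ => ?_⟩⟩
  by_cases h : ψ ∈ piece d p.1 p.2
  · have := h.2.2.le
    simpa [kapP, Kernel.piecewise_apply, h, idK, Kernel.restrict_apply] using this
  · simp [kapP, Kernel.piecewise_apply, h]

lemma kap_eq : kap d = Kernel.sum (kapP d) := by
  ext ψ s hs
  rw [Kernel.sum_apply' _ _ hs]
  by_cases h : ψ ∈ Fset d
  · rw [kap_of_mem h, ENNReal.tsum_prod (f := fun n k => kapP d (n, k) ψ s)]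
    have hin : ∀ n, ∑' k, kapP d (n, k) ψ s = ψ (s ∩ ann d n) := by
      intro n
      have hlt : ψ (ann d n) ≠ ⊤ :=
        ((measure_mono (disjointed_subset _ n)).trans_lt (h n)).ne
      obtain ⟨r, hr⟩ : ∃ r : NNReal, (r : ℝ≥0∞) = ψ (ann d n) := ⟨_, ENNReal.coe_toNNReal hlt⟩
      rw [tsum_eq_single ⌊r⌋₊]
      · have : ψ ∈ piece d n ⌊r⌋₊ := by
          refine ⟨h, ?_, ?_⟩
          · rw [← hr]; exact_mod_cast Nat.floor_le (zero_le : 0 ≤ r)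
          · rw [← hr]; exact_mod_cast Nat.lt_floor_add_one r
        simp [kapP, Kernel.piecewise_apply, this, idK, Kernel.restrict_apply,
          Measure.restrict_apply hs]
      · intro k hk
        have : ψ ∉ piece d n k := by
          rintro ⟨-, h1, h2⟩
          rw [← hr] at h1 h2
          apply hk
          symm
          rw [Nat.floor_eq_iff (zero_le : 0 ≤ r)]
          exact ⟨by exact_mod_cast h1, by exact_mod_cast h2⟩
        simp [kapP, Kernel.piecewise_apply, this]
    simp_rw [hin]
    rw [← measure_iUnion]
    · congr 1
      rw [← Set.inter_iUnion]
      have : ⋃ n, ann d n = Set.univ := by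
        unfold ann
        rw [iUnion_disjointed, Metric.iUnion_ball_nat]
      rw [this, Set.inter_univ]
    · intro i j hij
      exact ((disjoint_disjointed (fun n : ℕ => Metric.ball (0 : Vec d) n)) hij).mono
        Set.inter_subset_right Set.inter_subset_right
    · exact fun n => hs.inter (ann_meas n)
  · have : ∀ p : ℕ × ℕ, ψ ∉ piece d p.1 p.2 := fun p hp => h hp.1
    simp [kap_of_notMem h, kapP, Kernel.piecewise_apply, this]

instance : IsSFiniteKernel (kap d) := by
  rw [kap_eq]; infer_instance

lemma shift_mem {ψ : Measure (Vec d)} (t : Vec d) (h : ψ ∈ Fset d) : shiftM t ψ ∈ Fset d := by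
  rw [Fset_iff] at h
  intro n
  rw [shiftM, Measure.map_apply (by fun_prop) Metric.isOpen_ball.measurableSet]
  apply h
  refine (Metric.isBounded_ball (x := t) (r := n)).subset ?_
  intro x hx
  simpa [dist_eq_norm] using hx

lemma shift_neg (t : Vec d) (ψ : Measure (Vec d)) : shiftM (-t) (shiftM t ψ) = ψ := by
  unfold shiftM
  rw [Measure.map_map (by fun_prop) (by fun_prop)]
  convert Measure.map_id
  ext; simp

lemma shift_mem_iff {ψ : Measure (Vec d)} (t : Vec d) : shiftM t ψ ∈ Fset d ↔ ψ ∈ Fset d :=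
  ⟨fun h => by simpa [shift_neg] using shift_mem (-t) h, shift_mem t⟩

lemma shift_zero (t : Vec d) : shiftM t (0 : Measure (Vec d)) = 0 := by simp [shiftM]

lemma kap_shift (t : Vec d) (ψ : Measure (Vec d)) : kap d (shiftM t ψ) = shiftM t (kap d ψ) := by
  by_cases h : ψ ∈ Fset d
  · rw [kap_of_mem h, kap_of_mem (shift_mem t h)]
  · rw [kap_of_notMem h, kap_of_notMem (by rwa [shift_mem_iff]), shift_zero]

lemma shiftS_meas : Measurable (fun p : Measure (Vec d) × Vec d => shiftM p.2 (kap d p.1)) := by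
  refine Measure.measurable_of_measurable_coe _ fun s hs => ?_
  have : ∀ p : Measure (Vec d) × Vec d, shiftM p.2 (kap d p.1) s =
      (Kernel.prodMkRight (Vec d) (kap d)) p
        (Prod.mk p ⁻¹' {q : (Measure (Vec d) × Vec d) × Vec d | q.2 - q.1.2 ∈ s}) := by
    intro p
    rw [shiftM, Measure.map_apply (by fun_prop) hs]
    rfl
  simp_rw [this]
  refine Kernel.measurable_kernel_prodMk_left ?_
  exact (measurable_snd.sub measurable_fst.snd) hs

lemma shift_meas (t : Vec d) : Measurable (shiftM t : Measure (Vec d) → Measure (Vec d)) :=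
  Measure.measurable_map _ (by fun_prop)

lemma unitBox_meas : MeasurableSet (unitBox d) :=
  MeasurableSet.univ_pi fun _ => measurableSet_Ico

lemma unitBox_vol : volume (unitBox d) = 1 := by
  simp [unitBox, volume_pi, Measure.pi_pi]

def ind (d : ℕ) : Vec d → ℝ≥0∞ := (unitBox d).indicator 1

lemma ind_meas : Measurable (ind d) := measurable_one.indicator unitBox_meas

lemma ind_int : ∫⁻ t, ind d t = 1 := by
  rw [ind, lintegral_indicator_one unitBox_meas, unitBox_vol]

/-- double integral measure -/
def RR (Q : Measure (Measure (Vec d))) : Measure (Measure (Vec d) × Vec d × Vec d) :=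
  Q ⊗ₘ (kap d ×ₖ kap d)

lemma RR_lint (Q : Measure (Measure (Vec d))) [SFinite Q]
    {f : Measure (Vec d) × Vec d × Vec d → ℝ≥0∞} (hf : Measurable f) :
    ∫⁻ p, f p ∂(RR Q) = ∫⁻ ψ, ∫⁻ x, ∫⁻ y, f (ψ, x, y) ∂(kap d ψ) ∂(kap d ψ) ∂Q := by
  rw [RR, Measure.lintegral_compProd hf]
  congr 1 with ψ
  rw [Kernel.lintegral_prod _ _ _ (by fun_prop)]

lemma RR_lint' (Q : Measure (Measure (Vec d))) [SFinite Q]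
    {f : Measure (Vec d) × Vec d × Vec d → ℝ≥0∞} (hf : Measurable f) :
    ∫⁻ p, f p ∂(RR Q) = ∫⁻ ψ, ∫⁻ x, ∫⁻ y, f (ψ, y, x) ∂(kap d ψ) ∂(kap d ψ) ∂Q := by
  rw [RR_lint Q hf]
  congr 1 with ψ
  rw [lintegral_lintegral_swap]
  exact (hf.comp (by fun_prop : Measurable fun p : Vec d × Vec d => (ψ, p))).aemeasurable

lemma RR_inv (Q : Measure (Measure (Vec d))) [SFinite Q] (t : Vec d)
    (hQ : Q.map (shiftM t) = Q)
    {f : Measure (Vec d) × Vec d × Vec d → ℝ≥0∞} (hf : Measurable f) :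
    ∫⁻ p, f (shiftM t p.1, p.2.1 - t, p.2.2 - t) ∂(RR Q) = ∫⁻ p, f p ∂(RR Q) := by
  have hs := shift_meas (d := d) t
  rw [RR_lint Q (f := fun p => f (shiftM t p.1, p.2.1 - t, p.2.2 - t)) (by fun_prop), RR_lint Q hf]
  have h1 : Measurable fun ψ => ∫⁻ x, ∫⁻ y, f (ψ, x, y) ∂(kap d ψ) ∂(kap d ψ) := by
    have : ∀ ψ, ∫⁻ x, ∫⁻ y, f (ψ, x, y) ∂(kap d ψ) ∂(kap d ψ)
        = ∫⁻ p, f (ψ, p) ∂((kap d ×ₖ kap d) ψ) := fun ψ => by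
      rw [Kernel.lintegral_prod _ _ _ (by fun_prop)]
    simp_rw [this]
    exact hf.lintegral_kernel_prod_right'
  conv_rhs => rw [← hQ, lintegral_map h1 hs]
  congr 1 with ψ
  have : SFinite (kap d (shiftM t ψ)) := inferInstance
  have h2 : Measurable fun x => ∫⁻ y, f (shiftM t ψ, x, y) ∂(kap d (shiftM t ψ)) :=
    Measurable.lintegral_prod_right' (f := fun p : Vec d × Vec d => f (shiftM t ψ, p)) (by fun_prop)
  rw [kap_shift] at h2 ⊢
  refine Eq.trans ?_ (lintegral_map h2 (by fun_prop : Measurable fun x : Vec d => x - t)).symm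
  congr 1 with x
  exact (lintegral_map (f := fun y => f (shiftM t ψ, x - t, y)) (by fun_prop)
    (by fun_prop : Measurable fun x : Vec d => x - t)).symm

lemma RR_mtp (Q : Measure (Measure (Vec d))) [SFinite Q]
    (hQ : ∀ t, Q.map (shiftM t) = Q)
    {g : Measure (Vec d) → Vec d → Vec d → ℝ≥0∞}
    (hg : Measurable (fun p : Measure (Vec d) × Vec d × Vec d => g p.1 p.2.1 p.2.2))
    (hc : Covariant3 g) :
    ∫⁻ p, ind d p.2.1 * g p.1 p.2.1 p.2.2 ∂(RR Q) =
      ∫⁻ p, ind d p.2.2 * g p.1 p.2.1 p.2.2 ∂(RR Q) := by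
  have hi := ind_meas (d := d)
  have : SFinite (RR Q) := by unfold RR; infer_instance
  have hg1 : Measurable (fun p : (Measure (Vec d) × Vec d × Vec d) × Vec d =>
    g p.1.1 p.1.2.1 p.1.2.2) := hg.comp measurable_fst
  have hg2 : Measurable (fun p : Vec d × (Measure (Vec d) × Vec d × Vec d) =>
    g p.2.1 p.2.2.1 p.2.2.2) := hg.comp measurable_snd
  calc ∫⁻ p, ind d p.2.1 * g p.1 p.2.1 p.2.2 ∂(RR Q)
      = ∫⁻ p, ∫⁻ t, (ind d p.2.1 * g p.1 p.2.1 p.2.2) * ind d (p.2.2 - t) ∂volume ∂(RR Q) := by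
        congr 1 with p
        rw [lintegral_const_mul _ (by fun_prop),
          lintegral_sub_left_eq_self (fun t => ind d t) p.2.2, ind_int, mul_one]
    _ = ∫⁻ t, ∫⁻ p, (ind d p.2.1 * g p.1 p.2.1 p.2.2) * ind d (p.2.2 - t) ∂(RR Q) ∂volume := by
        rw [lintegral_lintegral_swap]
        apply Measurable.aemeasurable
        unfold Function.uncurry
        fun_prop
    _ = ∫⁻ t, ∫⁻ p, (ind d p.2.2 * g p.1 p.2.1 p.2.2) * ind d (p.2.1 + t) ∂(RR Q) ∂volume := by
        congr 1 with t
        rw [← RR_inv Q t (hQ t) (f := fun p =>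
          (ind d p.2.2 * g p.1 p.2.1 p.2.2) * ind d (p.2.1 + t)) (by fun_prop)]
        congr 1 with p
        simp only [sub_add_cancel, hc t p.2.1 p.2.2 p.1]
        ring
    _ = ∫⁻ p, ∫⁻ t, (ind d p.2.2 * g p.1 p.2.1 p.2.2) * ind d (p.2.1 + t) ∂volume ∂(RR Q) := by
        rw [lintegral_lintegral_swap]
        apply Measurable.aemeasurable
        unfold Function.uncurry
        fun_prop
    _ = _ := by
        congr 1 with p
        rw [lintegral_const_mul _ (by fun_prop),
          lintegral_add_left_eq_self (fun t => ind d t) p.2.1, ind_int, mul_one]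

/-- Campbell formula. -/
lemma campbell (Q : Measure (Measure (Vec d))) [SFinite Q] (hF : ∀ᵐ ψ ∂Q, ψ ∈ Fset d)
    (c : ℝ≥0∞) (Pm : Measure (Measure (Vec d)))
    (hR : ∀ B : Set (Measure (Vec d)), MeasurableSet B →
      Pm B = c * ∫⁻ ψ, (∫⁻ x in unitBox d,
          B.indicator (fun _ => (1 : ℝ≥0∞)) (shiftM x (kap d ψ)) ∂(kap d ψ)) ∂Q)
    {k : Measure (Vec d) → Vec d → ℝ≥0∞} (hk : Measurable (Function.uncurry k)) :
    ∫⁻ ψ, (∫⁻ y, k ψ y ∂ψ) ∂Pm = c * ∫⁻ ψ, ∫⁻ x, ∫⁻ y,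
      ind d x * k (shiftM x ψ) (y - x) ∂(kap d ψ) ∂(kap d ψ) ∂Q := by
  have hS := shiftS_meas (d := d)
  have hReq : Pm = c • ((Q ⊗ₘ ((kap d).restrict unitBox_meas)).map
      (fun p : Measure (Vec d) × Vec d => shiftM p.2 (kap d p.1))) := by
    ext B hB
    rw [hR B hB, Measure.smul_apply, smul_eq_mul, Measure.map_apply hS hB,
      ← lintegral_indicator_one (hS hB), Measure.lintegral_compProd
        (measurable_one.indicator (hS hB))]
    rfl
  have hRF : ∀ᵐ ψ ∂Pm, ψ ∈ Fset d := by
    rw [ae_iff]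
    change Pm (Fset d)ᶜ = 0
    rw [hR _ Fset_meas.compl, lintegral_eq_zero_of_ae_eq_zero, mul_zero]
    filter_upwards [hF] with ψ hψ
    rw [kap_of_mem hψ]
    simp [shift_mem _ hψ]
  have hK : Measurable fun ψ => ∫⁻ y, k ψ y ∂(kap d ψ) :=
    Measurable.lintegral_kernel_prod_right' hk
  calc ∫⁻ ψ, (∫⁻ y, k ψ y ∂ψ) ∂Pm = ∫⁻ ψ, (∫⁻ y, k ψ y ∂(kap d ψ)) ∂Pm := by
        apply lintegral_congr_ae
        filter_upwards [hRF] with ψ hψ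
        rw [kap_of_mem hψ]
    _ = _ := by
        rw [hReq, lintegral_smul_measure, smul_eq_mul, lintegral_map hK hS]
        congr 1
        refine (Measure.lintegral_compProd (hK.comp hS)).trans ?_
        simp only [Function.comp_apply]
        apply lintegral_congr_ae
        filter_upwards [hF] with ψ hψ
        have hsf : SFinite ψ := by rw [← kap_of_mem hψ]; infer_instance
        rw [Kernel.restrict_apply, ← lintegral_indicator unitBox_meas]
        congr 1 with x
        simp only [ind]
        by_cases hx : x ∈ unitBox d
        · simp only [hx, Set.indicator_of_mem, Pi.one_apply, one_mul, kap_of_mem hψ,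
            kap_of_mem (shift_mem x hψ)]
          exact lintegral_map (hk.of_uncurry_left)
            (by fun_prop : Measurable fun y : Vec d => y - x)
        · simp [hx]

end Aux


/-- The Palm distribution `P_Φ` of a stationary random measure `Φ` on `ℝ^d`
with intensity `λ_Φ ∈ (0,∞)`, defined by
`P_Φ(B) = λ_Φ⁻¹ E[∫_{[0,1)^d} 1_B(T_x Φ) dΦ(x)]`, is mass-stationary. -/
theorem stmt14 {d : ℕ} {Ω : Type*} [MeasurableSpace Ω] (P : Measure Ω) [IsProbabilityMeasure P]
    (Φ : Ω → Measure (Vec d)) (hΦm : Measurable Φ)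
    (hbf : ∀ᵐ ω ∂P, BddFinite (Φ ω))
    (hstat : ∀ t : Vec d, P.map (fun ω => shiftM t (Φ ω)) = P.map Φ)
    (hpos : 0 < ∫⁻ ω, Φ ω (unitBox d) ∂P)
    (hfin : (∫⁻ ω, Φ ω (unitBox d) ∂P) < ⊤)
    (PΦ : Measure (Measure (Vec d)))
    (hPalm : ∀ B : Set (Measure (Vec d)), MeasurableSet B →
      PΦ B = (∫⁻ ω, Φ ω (unitBox d) ∂P)⁻¹ *
        ∫⁻ ω, (∫⁻ x in unitBox d,
          B.indicator (fun _ => (1 : ℝ≥0∞)) (shiftM x (Φ ω)) ∂(Φ ω)) ∂P) :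
    MassStationaryLaw PΦ := by

  intro g hg hc
  have hQp : IsProbabilityMeasure (P.map Φ) := Measure.isProbabilityMeasure_map hΦm.aemeasurable
  have hF : ∀ᵐ ψ ∂(P.map Φ), ψ ∈ Fset d := by
    refine (ae_map_iff (p := fun ψ => ψ ∈ Fset d) hΦm.aemeasurable Fset_meas).mpr ?_
    filter_upwards [hbf] with ω h
    rwa [Fset_iff]
  have hQ : ∀ t, (P.map Φ).map (shiftM t) = P.map Φ := by
    intro t
    rw [Measure.map_map (shift_meas t) hΦm]
    exact hstat t
  have hR : ∀ B : Set (Measure (Vec d)), MeasurableSet B →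
      PΦ B = (∫⁻ ω, Φ ω (unitBox d) ∂P)⁻¹ * ∫⁻ ψ, (∫⁻ x in unitBox d,
          B.indicator (fun _ => (1 : ℝ≥0∞)) (shiftM x (kap d ψ)) ∂(kap d ψ)) ∂(P.map Φ) := by
    intro B hB
    rw [hPalm B hB, lintegral_map _ hΦm]
    · congr 1
      apply lintegral_congr_ae
      filter_upwards [hbf] with ω h
      rw [← Fset_iff] at h
      simp only [kap_of_mem h]
    · exact Measurable.lintegral_kernel_prod_right'
        (κ := ProbabilityTheory.Kernel.restrict (kap d) unitBox_meas)
        (f := fun p : Measure (Vec d) × Vec d =>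
          B.indicator (fun _ => (1 : ℝ≥0∞)) (shiftM p.2 (kap d p.1)))
        ((measurable_const.indicator hB).comp shiftS_meas)
  have hi := ind_meas (d := d)
  have e1 : ∀ ψ (x y : Vec d), g (shiftM x ψ) 0 (y - x) = g ψ x y := fun ψ x y => by
    simpa using hc x x y ψ
  have e2 : ∀ ψ (x y : Vec d), g (shiftM x ψ) (y - x) 0 = g ψ y x := fun ψ x y => by
    simpa using hc x y x ψ
  rw [campbell (P.map Φ) hF _ PΦ hR (k := fun ψ y => g ψ 0 y)
      (hg.comp (by fun_prop : Measurable fun p : Measure (Vec d) × Vec d => (p.1, (0 : Vec d), p.2))),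
    campbell (P.map Φ) hF _ PΦ hR (k := fun ψ y => g ψ y 0)
      (hg.comp (by fun_prop : Measurable fun p : Measure (Vec d) × Vec d => (p.1, p.2, (0 : Vec d))))]
  congr 1
  simp only [e1, e2]
  have h := RR_mtp (P.map Φ) hQ hg hc
  rw [RR_lint (P.map Φ) (f := fun p => ind d p.2.1 * g p.1 p.2.1 p.2.2) (by fun_prop),
    RR_lint' (P.map Φ) (f := fun p => ind d p.2.2 * g p.1 p.2.1 p.2.2) (by fun_prop)] at h
  exact h
end
end

section
/- Let (Y_n)_{n∈ℤ} be a sequence of ℝ^d-valued random variables with Y_0 = 0 and stationary increments, i.e. for every k ∈ ℤ the sequence (Y_{n+k} − Y_k)_{n∈ℤ} has the same law as (Y_n)_{n∈ℤ}. Assume that the random measure m := Σ_{n∈ℤ} δ_{Y_n} is almost surely finite on bounded sets. Then m is mass-stationary: for every translation-covariant measurable g : M(ℝ^d) × ℝ^d × ℝ^d → [0,∞], E[Σ_{n∈ℤ} g(m, 0, Y_n)] = E[Σ_{n∈ℤ} g(m, Y_n, 0)]. -/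
open MeasureTheory ENNReal

noncomputable section

/-- The counting measure of a sequence. -/
def sumD {d : ℕ} (y : ℤ → Vec d) : Measure (Vec d) := Measure.sum fun m : ℤ => Measure.dirac (y m)

theorem measurable_sumD {d : ℕ} : Measurable (sumD (d := d)) := by
  refine Measure.measurable_of_measurable_coe _ fun s hs => ?_
  simp only [sumD, Measure.sum_apply _ hs]
  refine Measurable.ennreal_tsum fun n => ?_
  exact (Measure.measurable_coe hs).comp (Measure.measurable_dirac.comp (measurable_pi_apply n))

theorem shift_sumD {d : ℕ} (t : Vec d) (k : ℤ) (y : ℤ → Vec d) :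
    shiftM t (sumD y) = sumD (fun n => y (n + k) - t) := by
  have hm : Measurable (fun x : Vec d => x - t) := measurable_id.sub_const t
  ext s hs
  rw [shiftM, Measure.map_apply hm hs, sumD, sumD, Measure.sum_apply _ hs,
    Measure.sum_apply _ (hm hs), ← (Equiv.addRight k).tsum_eq]
  refine tsum_congr fun n => ?_
  rw [Measure.dirac_apply' _ hs, Measure.dirac_apply' _ (hm hs)]
  rfl

/-- Let `(Y_n)_{n ∈ ℤ}` be ℝ^d-valued with `Y 0 = 0` and stationary
increments, and suppose the random measure `m := ∑_{n ∈ ℤ} δ_{Y_n}` is a.s. finite on bounded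
sets.  Then `m` is mass-stationary: for every translation-covariant measurable `g`,
`E[∑_n g(m, 0, Y_n)] = E[∑_n g(m, Y_n, 0)]`. -/
theorem stmt18 {d : ℕ} {Ω : Type*} [MeasurableSpace Ω] (P : Measure Ω) [IsProbabilityMeasure P]
    (Y : Ω → ℤ → Vec d) (hYm : Measurable Y)
    (hY0 : ∀ ω, Y ω 0 = 0)
    (hstat : ∀ k : ℤ, P.map (fun ω => fun n => Y ω (n + k) - Y ω k) = P.map Y)
    (hbf : ∀ᵐ ω ∂P, BddFinite (Measure.sum fun n : ℤ => Measure.dirac (Y ω n)))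
    (g : Measure (Vec d) → Vec d → Vec d → ℝ≥0∞)
    (hgm : Measurable (fun p : Measure (Vec d) × Vec d × Vec d => g p.1 p.2.1 p.2.2))
    (hgcov : Covariant3 g) :
    ∫⁻ ω, (∑' n : ℤ, g (Measure.sum fun m : ℤ => Measure.dirac (Y ω m)) 0 (Y ω n)) ∂P
      = ∫⁻ ω, (∑' n : ℤ, g (Measure.sum fun m : ℤ => Measure.dirac (Y ω m)) (Y ω n) 0) ∂P := by
  have hYn : ∀ n, Measurable fun ω => Y ω n := fun n => (measurable_pi_apply n).comp hYm
  have hF : ∀ n : ℤ, Measurable fun y : ℤ → Vec d => g (sumD y) 0 (y n) := fun n =>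
    hgm.comp (measurable_sumD.prodMk (measurable_const.prodMk (measurable_pi_apply n)))
  have hG : ∀ n : ℤ, Measurable fun y : ℤ → Vec d => g (sumD y) (y n) 0 := fun n =>
    hgm.comp (measurable_sumD.prodMk ((measurable_pi_apply n).prodMk measurable_const))
  change ∫⁻ ω, (∑' n : ℤ, g (sumD (Y ω)) 0 (Y ω n)) ∂P
    = ∫⁻ ω, (∑' n : ℤ, g (sumD (Y ω)) (Y ω n) 0) ∂P
  rw [lintegral_tsum (f := fun n ω => g (sumD (Y ω)) 0 (Y ω n))
      fun n => ((hF n).comp hYm).aemeasurable,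
    lintegral_tsum (f := fun n ω => g (sumD (Y ω)) (Y ω n) 0)
      fun n => ((hG n).comp hYm).aemeasurable, ← (Equiv.neg ℤ).tsum_eq]
  refine tsum_congr fun k => ?_
  have hZ : Measurable (fun ω => fun n => Y ω (n + k) - Y ω k) :=
    measurable_pi_lambda _ fun n => (hYn _).sub (hYn _)
  have key : ∀ ω, g (sumD (Y ω)) (Y ω k) 0 =
      g (sumD (fun n => Y ω (n + k) - Y ω k)) 0 (Y ω (-k + k) - Y ω k) := by
    intro ω
    rw [← hgcov (Y ω k), shift_sumD _ k, sub_self, neg_add_cancel, hY0]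
  simp only [key]
  rw [Equiv.neg_apply, ← lintegral_map (hF (-k)) hYm, ← hstat k, lintegral_map (hF (-k)) hZ]
end
end
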